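/- Let k > 0 and λ > 0 be real numbers, let d ∈ ℝ² be a unit vector and d⊥ = (−d₂, d₁) its rotation by π/2. Define w : ℝ² → ℝ by w(x) = (1/(k²λ²))·(2(x·d⊥)²/λ² − 1), the tapered wave u : ℝ² → ℂ by u(x) = exp(i·k·(x·d)·(1 + w(x))) · exp(−(x·d⊥)²/λ²), and F : ℝ² → ℂ by F(x) = u(x)·( −w(x)² − 16·(x·d)²·(x·d⊥)²/(k⁴λ⁸) + (4·i·k·(x·d)/(k⁴λ⁴))·(1 − 4·(x·d⊥)²/λ²) ). Then u satisfies the non-homogeneous Helmholtz equation Δu(x) + k²·u(x) = k²·F(x) for every x ∈ ℝ², where Δ denotes the Laplacian on ℝ². -/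

import Mathlib

open scoped RealInnerProductSpace

/-- The Laplacian of a complex-valued function on the Euclidean plane `ℝ²`:
the sum of its second partial derivatives with respect to the standard orthonormal basis. -/
noncomputable def laplacian (v : EuclideanSpace ℝ (Fin 2) → ℂ)
    (x : EuclideanSpace ℝ (Fin 2)) : ℂ :=
  ∑ i : Fin 2, fderiv ℝ (fun y => fderiv ℝ v y (EuclideanSpace.single i (1 : ℝ))) x
    (EuclideanSpace.single i (1 : ℝ))

/-!
Along `d` the phase of `u` is affine, along `d⊥` it is a quadratic polynomial, and the second
derivative of `exp (a + b t + c t²)` at `t = 0` is `(b² + 2 c) exp a`. Computing `Δ` in the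
orthonormal basis `(d, d⊥)` therefore reduces the equation to an identity for the coefficients.
There, writing `t = x·d⊥`, the term `-2 k² w` of `-k² (1 + w)²` cancels `4 t² / λ⁴ - 2 / λ²`,
the contribution of the Gaussian factor: this is what the choice of `w` achieves.
-/

section SecondDerivative

variable {𝕜 E F : Type*} [NontriviallyNormedField 𝕜] [NormedAddCommGroup E] [NormedSpace 𝕜 E]
  [NormedAddCommGroup F] [NormedSpace 𝕜 F] {f : E → F} {x : E}

theorem fderiv_fderiv_apply_eq_iteratedFDeriv_two (hf : ContDiffAt 𝕜 2 f x) (v v' : E) :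
    fderiv 𝕜 (fun y => fderiv 𝕜 f y v) x v' = iteratedFDeriv 𝕜 2 f x ![v', v] := by
  have hf' : DifferentiableAt 𝕜 (fderiv 𝕜 f) x :=
    (hf.fderiv_right (m := 1) (by norm_num)).differentiableAt one_ne_zero
  rw [fderiv_clm_apply hf' (differentiableAt_const v), iteratedFDeriv_two_apply]
  simp

theorem iteratedDeriv_two_comp_line (hf : ContDiffAt 𝕜 2 f x) (v : E) :
    iteratedDeriv 2 (fun t : 𝕜 => f (x + t • v)) 0 = iteratedFDeriv 𝕜 2 f x ![v, v] := by
  have hline (t : 𝕜) : HasDerivAt (fun t : 𝕜 => x + t • v) v t := by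
    simpa using ((hasDerivAt_id t).smul_const v).const_add x
  have hderiv : deriv (fun t : 𝕜 => x + t • v) = fun _ => v := funext fun t => (hline t).deriv
  have hsecond : iteratedDeriv 2 (fun t : 𝕜 => x + t • v) 0 = 0 := by
    rw [iteratedDeriv_succ', hderiv, iteratedDeriv_one, deriv_const]
  have hchain := iteratedDeriv_vcomp_two (g := f) (f := fun t : 𝕜 => x + t • v) (x := 0)
    (by simpa using hf) (by fun_prop)
  rw [hsecond, map_zero, add_zero, hderiv, zero_smul, add_zero] at hchain
  exact hchain.trans (congrArg _ (funext (Fin.forall_fin_two.mpr ⟨rfl, rfl⟩)))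

theorem iteratedDeriv_two_cexp_quadratic (a b c : ℂ) :
    iteratedDeriv 2 (fun t : ℝ => Complex.exp (a + b * t + c * t ^ 2)) 0 =
      (b ^ 2 + 2 * c) * Complex.exp a := by
  have hid (t : ℝ) : HasDerivAt (fun t : ℝ => (t : ℂ)) 1 t := Complex.ofRealCLM.hasDerivAt
  have hexp (t : ℝ) : HasDerivAt (fun t : ℝ => Complex.exp (a + b * t + c * t ^ 2))
      (Complex.exp (a + b * t + c * t ^ 2) * (b + 2 * c * t)) t :=
    ((((hid t).const_mul b).const_add a).add (((hid t).pow 2).const_mul c)).cexp.congr_deriv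
      (by simp only [Pi.add_apply, Pi.pow_apply]; ring)
  have hexp' := (hexp 0).mul (((hid 0).const_mul (2 * c)).const_add b)
  rw [iteratedDeriv_succ', iteratedDeriv_one, funext fun t => (hexp t).deriv]
  refine hexp'.deriv.trans ?_
  simp only [Complex.ofReal_zero, mul_zero, add_zero, zero_pow two_ne_zero, mul_one]
  ring

end SecondDerivative

section Laplacian

open scoped Laplacian

theorem laplacian_eq_innerProductSpace_laplacian {v : EuclideanSpace ℝ (Fin 2) → ℂ}
    {x : EuclideanSpace ℝ (Fin 2)} (hv : ContDiffAt ℝ 2 v x) : laplacian v x = Δ v x := by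
  simp [laplacian, fderiv_fderiv_apply_eq_iteratedFDeriv_two hv,
    InnerProductSpace.laplacian_eq_iteratedFDeriv_orthonormalBasis v
      (EuclideanSpace.basisFun (Fin 2) ℝ)]

variable {E F : Type*} [NormedAddCommGroup E] [InnerProductSpace ℝ E] [FiniteDimensional ℝ E]
  [NormedAddCommGroup F] [NormedSpace ℝ F] {κ : Type*} [Fintype κ] {v : κ → E} {x : E}

theorem laplacian_eq_sum_iteratedDeriv_of_orthonormal (hv : Orthonormal ℝ v) {f : E → F}
    (hf : ContDiffAt ℝ 2 f x) (hinv : ∀ y, (∀ i, ⟪v i, y⟫ = 0) → f (x + y) = f x) :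
    Δ f x = ∑ i, iteratedDeriv 2 (fun t : ℝ => f (x + t • v i)) 0 := by
  classical
  obtain ⟨s, b, hvs, hb⟩ := hv.toSubtypeRange.exists_orthonormalBasis_extension
  have horth : ∀ z ∈ s, z ∉ Finset.univ.image v → ∀ i, ⟪v i, z⟫ = 0 := by
    intro z hz hzv i
    have hne : v i ≠ z := fun h => hzv (h ▸ Finset.mem_image_of_mem v (Finset.mem_univ i))
    simpa [hb] using b.orthonormal.inner_eq_zero (i := ⟨v i, hvs ⟨i, rfl⟩⟩) (j := ⟨z, hz⟩)
      (by simpa using hne)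
  calc Δ f x = ∑ z : s, iteratedFDeriv ℝ 2 f x ![b z, b z] :=
        congrFun (InnerProductSpace.laplacian_eq_iteratedFDeriv_orthonormalBasis f b) x
    _ = ∑ z ∈ s, iteratedDeriv 2 (fun t : ℝ => f (x + t • z)) 0 := by
        simp only [hb, ← iteratedDeriv_two_comp_line hf]
        exact Finset.sum_coe_sort s fun z => iteratedDeriv 2 (fun t : ℝ => f (x + t • z)) 0
    _ = ∑ z ∈ Finset.univ.image v, iteratedDeriv 2 (fun t : ℝ => f (x + t • z)) 0 := by
        have himage : Finset.univ.image v ⊆ s :=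
          Finset.image_subset_iff.mpr fun i _ => hvs ⟨i, rfl⟩
        refine (Finset.sum_subset himage fun z hz hzv => ?_).symm
        have hconst (t : ℝ) : f (x + t • z) = f x :=
          hinv _ fun i => by rw [inner_smul_right, horth z hz hzv i, mul_zero]
        simp only [hconst, iteratedDeriv_const, OfNat.ofNat_ne_zero, if_false]
    _ = ∑ i, iteratedDeriv 2 (fun t : ℝ => f (x + t • v i)) 0 :=
        Finset.sum_image fun i _ j _ h => hv.linearIndependent.injective h

theorem laplacian_cexp_of_quadratic_along (hv : Orthonormal ℝ v) {φ : E → ℂ}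
    (hφ : ContDiffAt ℝ 2 φ x) {β γ : κ → ℂ}
    (hquad : ∀ i (t : ℝ), φ (x + t • v i) = φ x + β i * t + γ i * t ^ 2)
    (hinv : ∀ y, (∀ i, ⟪v i, y⟫ = 0) → φ (x + y) = φ x) :
    Δ (fun y => Complex.exp (φ y)) x = (∑ i, (β i ^ 2 + 2 * γ i)) * Complex.exp (φ x) := by
  rw [laplacian_eq_sum_iteratedDeriv_of_orthonormal hv hφ.cexp
    fun y hy => congrArg Complex.exp (hinv y hy), Finset.sum_mul]
  simp only [hquad, iteratedDeriv_two_cexp_quadratic]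

end Laplacian

section TaperedWave

/-- The angular correction `w` of the tapered wave, as a function of `t = x·d⊥`. The arguments are
complex so that it can enter the complex phase without casts. -/
noncomputable def taperedWeight (k lam t : ℂ) : ℂ :=
  1 / (k ^ 2 * lam ^ 2) * (2 * t ^ 2 / lam ^ 2 - 1)

/-- The total exponent of the tapered wave `u`, Gaussian taper included, as a function of the
coordinates `s = x·d` and `t = x·d⊥`. -/
noncomputable def taperedPhase (k lam s t : ℂ) : ℂ :=
  Complex.I * k * s * (1 + taperedWeight k lam t) + -t ^ 2 / lam ^ 2

/-- The first derivative of `taperedPhase` in the transverse coordinate `t`. -/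
noncomputable def taperedPhaseSlope (k lam s t : ℂ) : ℂ :=
  4 * Complex.I * k * s * t / (k ^ 2 * lam ^ 4) - 2 * t / lam ^ 2

/-- Half the second derivative of `taperedPhase` in the transverse coordinate `t`, in which the
phase is quadratic. -/
noncomputable def taperedPhaseCurvature (k lam s : ℂ) : ℂ :=
  2 * Complex.I * k * s / (k ^ 2 * lam ^ 4) - 1 / lam ^ 2

theorem taperedPhase_add_left (k lam s t h : ℂ) :
    taperedPhase k lam (s + h) t =
      taperedPhase k lam s t + Complex.I * k * (1 + taperedWeight k lam t) * h := by
  simp only [taperedPhase]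
  ring

theorem taperedPhase_add_right (k lam s t h : ℂ) :
    taperedPhase k lam s (t + h) =
      taperedPhase k lam s t + taperedPhaseSlope k lam s t * h +
        taperedPhaseCurvature k lam s * h ^ 2 := by
  simp only [taperedPhase, taperedWeight, taperedPhaseSlope, taperedPhaseCurvature]
  ring

theorem taperedPhase_helmholtz_identity {k lam : ℂ} (hk : k ≠ 0) (hlam : lam ≠ 0) (s t : ℂ) :
    (Complex.I * k * (1 + taperedWeight k lam t)) ^ 2 + taperedPhaseSlope k lam s t ^ 2 +
        2 * taperedPhaseCurvature k lam s + k ^ 2 =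
      k ^ 2 * (-taperedWeight k lam t ^ 2 - 16 * s ^ 2 * t ^ 2 / (k ^ 4 * lam ^ 8) +
        4 * Complex.I * k * s / (k ^ 4 * lam ^ 4) * (1 - 4 * t ^ 2 / lam ^ 2)) := by
  have hweight : 2 * k ^ 2 * taperedWeight k lam t = 4 * t ^ 2 / lam ^ 4 - 2 / lam ^ 2 := by
    rw [taperedWeight]
    field_simp
    ring
  have hslope : taperedPhaseSlope k lam s t ^ 2 + 2 * taperedPhaseCurvature k lam s =
      4 * t ^ 2 / lam ^ 4 - 2 / lam ^ 2 + k ^ 2 * (-16 * s ^ 2 * t ^ 2 / (k ^ 4 * lam ^ 8) +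
        4 * Complex.I * k * s / (k ^ 4 * lam ^ 4) * (1 - 4 * t ^ 2 / lam ^ 2)) := by
    rw [taperedPhaseSlope, taperedPhaseCurvature]
    field_simp
    linear_combination (16 * s ^ 2 * t ^ 2) * Complex.I_sq
  linear_combination k ^ 2 * (1 + taperedWeight k lam t) ^ 2 * Complex.I_sq + hslope - hweight

theorem contDiff_taperedPhase_inner {E : Type*} [NormedAddCommGroup E] [InnerProductSpace ℝ E]
    (k lam : ℂ) (d e : E) {n : WithTop ℕ∞} :
    ContDiff ℝ n fun x : E => taperedPhase k lam (⟪x, d⟫ : ℝ) (⟪x, e⟫ : ℝ) := by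
  have hinner (v : E) : ContDiff ℝ n fun x : E => ((⟪x, v⟫ : ℝ) : ℂ) :=
    Complex.ofRealCLM.contDiff.comp (contDiff_id.inner ℝ contDiff_const)
  simp only [taperedPhase, taperedWeight]
  fun_prop

open scoped Laplacian in
theorem laplacian_cexp_taperedPhase_inner {E : Type*} [NormedAddCommGroup E]
    [InnerProductSpace ℝ E] [FiniteDimensional ℝ E] {d e : E} (hde : Orthonormal ℝ ![d, e])
    (k lam : ℂ) (x : E) :
    Δ (fun y : E => Complex.exp (taperedPhase k lam (⟪y, d⟫ : ℝ) (⟪y, e⟫ : ℝ))) x =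
      ((Complex.I * k * (1 + taperedWeight k lam (⟪x, e⟫ : ℝ))) ^ 2 +
        taperedPhaseSlope k lam (⟪x, d⟫ : ℝ) (⟪x, e⟫ : ℝ) ^ 2 +
        2 * taperedPhaseCurvature k lam (⟪x, d⟫ : ℝ)) *
      Complex.exp (taperedPhase k lam (⟪x, d⟫ : ℝ) (⟪x, e⟫ : ℝ)) := by
  have hd : ‖d‖ = 1 := hde.norm_eq_one 0
  have he : ‖e‖ = 1 := hde.norm_eq_one 1
  have horth : ⟪d, e⟫ = 0 := hde.inner_eq_zero (i := 0) (j := 1) (by decide)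
  have hed : ⟪e, d⟫ = 0 := by rw [real_inner_comm, horth]
  rw [laplacian_cexp_of_quadratic_along hde (contDiff_taperedPhase_inner k lam d e).contDiffAt
    (β := ![Complex.I * k * (1 + taperedWeight k lam (⟪x, e⟫ : ℝ)),
      taperedPhaseSlope k lam (⟪x, d⟫ : ℝ) (⟪x, e⟫ : ℝ)])
    (γ := ![0, taperedPhaseCurvature k lam (⟪x, d⟫ : ℝ)])]
  · simp [add_assoc]
  · intro i t
    fin_cases i
    · simp [inner_add_left, inner_smul_left, hd, horth, taperedPhase_add_left]
    · simp [inner_add_left, inner_smul_left, he, hed, taperedPhase_add_right]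
  · intro y hy
    have hyd : ⟪y, d⟫ = 0 := by simpa [real_inner_comm] using hy 0
    have hye : ⟪y, e⟫ = 0 := by simpa [real_inner_comm] using hy 1
    simp only [inner_add_left, hyd, hye, add_zero]

theorem orthonormal_pair_of_rotation {d e : EuclideanSpace ℝ (Fin 2)} (hd : ‖d‖ = 1)
    (he0 : e 0 = -d 1) (he1 : e 1 = d 0) : Orthonormal ℝ ![d, e] := by
  have he : ‖e‖ = 1 := by
    rw [← hd, EuclideanSpace.norm_eq, EuclideanSpace.norm_eq]
    simp [Fin.sum_univ_two, he0, he1, add_comm]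
  have hde : ⟪d, e⟫ = 0 := by
    simp [PiLp.inner_apply, Fin.sum_univ_two, he0, he1, mul_comm]
  simp [orthonormal_vecCons_iff, hd, he, hde]

open scoped Laplacian in
theorem tapered_wave_helmholtz_general {E : Type*} [NormedAddCommGroup E] [InnerProductSpace ℝ E]
    [FiniteDimensional ℝ E] {k lam : ℝ} (hk : k ≠ 0) (hlam : lam ≠ 0) {d e : E}
    (hde : Orthonormal ℝ ![d, e]) {w : E → ℝ}
    (hw : ∀ x, w x = 1 / (k ^ 2 * lam ^ 2) * (2 * (⟪x, e⟫ : ℝ) ^ 2 / lam ^ 2 - 1))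
    {u F : E → ℂ}
    (hu : ∀ x, u x = Complex.exp (Complex.I * (k : ℂ) * ((⟪x, d⟫ : ℝ) : ℂ) * (1 + (w x : ℂ))) *
      Complex.exp (-((⟪x, e⟫ : ℝ) : ℂ) ^ 2 / (lam : ℂ) ^ 2))
    (hF : ∀ x, F x = u x * (-(w x : ℂ) ^ 2
      - 16 * ((⟪x, d⟫ : ℝ) : ℂ) ^ 2 * ((⟪x, e⟫ : ℝ) : ℂ) ^ 2 / ((k : ℂ) ^ 4 * (lam : ℂ) ^ 8)
      + 4 * Complex.I * (k : ℂ) * ((⟪x, d⟫ : ℝ) : ℂ) / ((k : ℂ) ^ 4 * (lam : ℂ) ^ 4)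
        * (1 - 4 * ((⟪x, e⟫ : ℝ) : ℂ) ^ 2 / (lam : ℂ) ^ 2))) :
    ContDiff ℝ 2 u ∧ ∀ x, Δ u x + (k : ℂ) ^ 2 * u x = (k : ℂ) ^ 2 * F x := by
  have hw' (x : E) : (w x : ℂ) = taperedWeight k lam (⟪x, e⟫ : ℝ) := by
    rw [hw, taperedWeight]
    push_cast
    rfl
  obtain rfl : u = fun x => Complex.exp (taperedPhase k lam (⟪x, d⟫ : ℝ) (⟪x, e⟫ : ℝ)) :=
    funext fun x => by rw [hu, hw', ← Complex.exp_add, taperedPhase]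
  refine ⟨(contDiff_taperedPhase_inner k lam d e).cexp, fun x => ?_⟩
  have hid := taperedPhase_helmholtz_identity (Complex.ofReal_ne_zero.mpr hk)
    (Complex.ofReal_ne_zero.mpr hlam) (⟪x, d⟫ : ℝ) (⟪x, e⟫ : ℝ)
  rw [laplacian_cexp_taperedPhase_inner hde, ← add_mul, hid, hF, hw']
  ring

end TaperedWave

/-- The Thorsos tapered wave `u` satisfies the non-homogeneous Helmholtz equation
`Δu + k²u = k²F` in `ℝ²`. -/
theorem tapered_wave_helmholtz
    (k lam : ℝ) (hk : 0 < k) (hlam : 0 < lam)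
    (d dperp : EuclideanSpace ℝ (Fin 2)) (hd : ‖d‖ = 1)
    (hperp0 : dperp 0 = -(d 1)) (hperp1 : dperp 1 = d 0)
    (w : EuclideanSpace ℝ (Fin 2) → ℝ)
    (hw : ∀ x, w x = 1 / (k ^ 2 * lam ^ 2) * (2 * (⟪x, dperp⟫ : ℝ) ^ 2 / lam ^ 2 - 1))
    (u F : EuclideanSpace ℝ (Fin 2) → ℂ)
    (hu : ∀ x, u x = Complex.exp (Complex.I * (k : ℂ) * ((⟪x, d⟫ : ℝ) : ℂ) * (1 + (w x : ℂ))) *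
      Complex.exp (-((⟪x, dperp⟫ : ℝ) : ℂ) ^ 2 / (lam : ℂ) ^ 2))
    (hF : ∀ x, F x = u x * (-(w x : ℂ) ^ 2
      - 16 * ((⟪x, d⟫ : ℝ) : ℂ) ^ 2 * ((⟪x, dperp⟫ : ℝ) : ℂ) ^ 2 / ((k : ℂ) ^ 4 * (lam : ℂ) ^ 8)
      + 4 * Complex.I * (k : ℂ) * ((⟪x, d⟫ : ℝ) : ℂ) / ((k : ℂ) ^ 4 * (lam : ℂ) ^ 4)
        * (1 - 4 * ((⟪x, dperp⟫ : ℝ) : ℂ) ^ 2 / (lam : ℂ) ^ 2))) :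
    ∀ x, laplacian u x + (k : ℂ) ^ 2 * u x = (k : ℂ) ^ 2 * F x := by
  obtain ⟨hsmooth, hhelm⟩ := tapered_wave_helmholtz_general hk.ne' hlam.ne'
    (orthonormal_pair_of_rotation hd hperp0 hperp1) hw hu hF
  exact fun x => laplacian_eq_innerProductSpace_laplacian hsmooth.contDiffAt ▸ hhelm x
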